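/- arXiv:gr-qc/0404039 — 10 statements merged into one kernel-verified Lean document; each statement's English description precedes it below -/
import Mathlib

section
/- For every 0 < l < 1, the function F_l satisfies lim_{q→∞} q·F_l(q) = 1; i.e. for large arguments the inverse-triad eigenvalue function reproduces the classical inverse q⁻¹. -/
/-- The (large-j) eigenvalue function of the inverse triad operator in loop
quantum cosmology, with ambiguity parameter l:
F_l(q) = (2l(l+1)(l+2)/3)^{1/(l−1)} · [ (l+1)((q+1)^{l+2} − |q−1|^{l+2})
  − (l+2)q((q+1)^{l+1} − sgn(q−1)|q−1|^{l+1}) ]^{1/(1−l)}. -/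
noncomputable def invTriadF (l q : ℝ) : ℝ :=
  (2 * l * (l + 1) * (l + 2) / 3) ^ ((1 : ℝ) / (l - 1)) *
    ((l + 1) * ((q + 1) ^ (l + 2) - |q - 1| ^ (l + 2))
      - (l + 2) * q * ((q + 1) ^ (l + 1)
        - Real.sign (q - 1) * |q - 1| ^ (l + 1))) ^ ((1 : ℝ) / (1 - l))

/-!
Put `x = q⁻¹`. The bracket in `F_l(q)` is `q ^ (l + 2) * G x` with
`G' x = (l + 1) (l + 2) x ((1 + x) ^ l - (1 - x) ^ l) ~ 2 l (l + 1) (l + 2) x ^ 2` as `x → 0`,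
so L'Hôpital's rule gives `G x ~ c x ^ 3` with `c = 2 l (l + 1) (l + 2) / 3`. Hence the bracket is
asymptotic to `c q ^ (l - 1)`, its power of exponent `1 / (1 - l)` to `c ^ (1 / (1 - l)) / q`, and
the prefactor `c ^ (1 / (l - 1))` cancels the constant.
-/

open Filter Topology

lemma tendsto_rpow_div_rpow_mul {g : ℝ → ℝ} {a c : ℝ} (p : ℝ) (hc : 0 < c)
    (hg : Tendsto (fun q => g q / q ^ a) atTop (𝓝 c)) :
    Tendsto (fun q => g q ^ p / q ^ (a * p)) atTop (𝓝 (c ^ p)) := by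
  refine (hg.rpow_const (p := p) (Or.inl hc.ne')).congr' ?_
  filter_upwards [hg.eventually_const_lt hc, eventually_gt_atTop 0] with q hratio hq
  have hg_pos : 0 < g q := (div_pos_iff_of_pos_right (Real.rpow_pos_of_pos hq a)).mp hratio
  rw [Real.div_rpow hg_pos.le (Real.rpow_nonneg hq.le a), Real.rpow_mul hq.le]

/-- The central difference `(1 + x) ^ a - (1 - x) ^ a` of the power function about `1`, with
half-step `x`; a genuine power difference only for `|x| ≤ 1`, because of the values of `Real.rpow`
at negative bases. -/
noncomputable def rpowCentralDiff (a x : ℝ) : ℝ :=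
  (1 + x) ^ a - (1 - x) ^ a

/-- The expression raised to the power `1 / (1 - l)` in `invTriadF l q`. -/
noncomputable def invTriadBracket (l q : ℝ) : ℝ :=
  (l + 1) * ((q + 1) ^ (l + 2) - |q - 1| ^ (l + 2))
    - (l + 2) * q * ((q + 1) ^ (l + 1) - Real.sign (q - 1) * |q - 1| ^ (l + 1))

/-- The bracket of the inverse triad function in the variable `x = q⁻¹`, with the factor
`q ^ (l + 2)` removed. -/
noncomputable def invTriadProfile (l x : ℝ) : ℝ :=
  (l + 1) * rpowCentralDiff (l + 2) x - (l + 2) * rpowCentralDiff (l + 1) x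

@[simp]
lemma rpowCentralDiff_zero (a : ℝ) : rpowCentralDiff a 0 = 0 := by
  simp [rpowCentralDiff]

lemma hasDerivAt_rpowCentralDiff (a : ℝ) {x : ℝ} (hx : |x| < 1) :
    HasDerivAt (rpowCentralDiff a) (a * ((1 + x) ^ (a - 1) + (1 - x) ^ (a - 1))) x := by
  obtain ⟨hx_left, hx_right⟩ := abs_lt.mp hx
  have hplus := ((hasDerivAt_id' x).const_add 1).rpow_const (p := a) (Or.inl (by linarith))
  have hminus := ((hasDerivAt_id' x).const_sub 1).rpow_const (p := a) (Or.inl (by linarith))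
  exact (hplus.sub hminus).congr_deriv (by ring)

lemma tendsto_rpowCentralDiff_div_self (a : ℝ) :
    Tendsto (fun x => rpowCentralDiff a x / x) (𝓝[≠] 0) (𝓝 (2 * a)) := by
  have hslope := (hasDerivAt_rpowCentralDiff a (x := 0) (by simp)).tendsto_slope_zero
  simpa [div_eq_inv_mul, one_add_one_eq_two, mul_comm a] using hslope

lemma add_one_rpow_sub_sub_one_rpow (a : ℝ) {q : ℝ} (hq : 1 ≤ q) :
    (q + 1) ^ a - (q - 1) ^ a = q ^ a * rpowCentralDiff a q⁻¹ := by
  have hq_pos : 0 < q := by linarith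
  have hinv_le : q⁻¹ ≤ 1 := inv_le_one_of_one_le₀ hq
  rw [rpowCentralDiff, mul_sub, ← Real.mul_rpow hq_pos.le (by positivity),
    ← Real.mul_rpow hq_pos.le (by linarith), mul_add, mul_sub, mul_one,
    mul_inv_cancel₀ hq_pos.ne']

@[simp]
lemma invTriadProfile_zero (l : ℝ) : invTriadProfile l 0 = 0 := by
  simp [invTriadProfile]

lemma hasDerivAt_invTriadProfile (l : ℝ) {x : ℝ} (hx : |x| < 1) :
    HasDerivAt (invTriadProfile l) ((l + 1) * (l + 2) * (x * rpowCentralDiff l x)) x := by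
  obtain ⟨hx_left, hx_right⟩ := abs_lt.mp hx
  have hderiv := ((hasDerivAt_rpowCentralDiff (l + 2) hx).const_mul (l + 1)).sub
    ((hasDerivAt_rpowCentralDiff (l + 1) hx).const_mul (l + 2))
  refine hderiv.congr_deriv ?_
  rw [show l + 2 - 1 = l + 1 by ring, add_sub_cancel_right,
    Real.rpow_add_one (by linarith : 1 + x ≠ 0), Real.rpow_add_one (by linarith : 1 - x ≠ 0),
    rpowCentralDiff]
  ring

lemma tendsto_invTriadProfile_div_cube (l : ℝ) :
    Tendsto (fun x => invTriadProfile l x / x ^ 3) (𝓝[≠] 0)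
      (𝓝 (2 * l * (l + 1) * (l + 2) / 3)) := by
  have habs_lt : ∀ᶠ x : ℝ in 𝓝 0, |x| < 1 :=
    continuous_abs.continuousAt.eventually_lt_const (by simp)
  have hprofile : Tendsto (invTriadProfile l) (𝓝 0) (𝓝 0) := by
    simpa using (hasDerivAt_invTriadProfile l (x := 0) (by simp)).continuousAt.tendsto
  have hcube : Tendsto (fun x : ℝ => x ^ 3) (𝓝 0) (𝓝 0) := by
    simpa using (continuous_pow 3).tendsto (0 : ℝ)
  have hderiv_ratio : Tendsto
      (fun x => (l + 1) * (l + 2) * (x * rpowCentralDiff l x) / (3 * x ^ 2)) (𝓝[≠] 0)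
      (𝓝 (2 * l * (l + 1) * (l + 2) / 3)) := by
    have hlim := (tendsto_rpowCentralDiff_div_self l).const_mul ((l + 1) * (l + 2) / 3)
    rw [show (l + 1) * (l + 2) / 3 * (2 * l) = 2 * l * (l + 1) * (l + 2) / 3 by ring] at hlim
    refine hlim.congr' ?_
    filter_upwards [self_mem_nhdsWithin] with x (hx : x ≠ 0)
    field_simp
  refine HasDerivAt.lhopital_zero_nhdsNE ?_ (.of_forall fun x => hasDerivAt_pow 3 x) ?_
    (hprofile.mono_left nhdsWithin_le_nhds) (hcube.mono_left nhdsWithin_le_nhds)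
    (by simpa using hderiv_ratio)
  · filter_upwards [nhdsWithin_le_nhds habs_lt] with x hx using hasDerivAt_invTriadProfile l hx
  · filter_upwards [self_mem_nhdsWithin] with x (hx : x ≠ 0)
    simpa using hx

lemma invTriadBracket_eq_rpow_mul_profile (l : ℝ) {q : ℝ} (hq : 1 < q) :
    invTriadBracket l q = q ^ (l + 2) * invTriadProfile l q⁻¹ := by
  have hq_pos : 0 < q := by linarith
  have hrpow : q ^ (l + 2) = q * q ^ (l + 1) := by
    rw [mul_comm, ← Real.rpow_add_one hq_pos.ne', add_assoc, one_add_one_eq_two]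
  rw [invTriadBracket, Real.sign_of_pos (sub_pos.mpr hq), one_mul, abs_of_pos (sub_pos.mpr hq),
    add_one_rpow_sub_sub_one_rpow _ hq.le, add_one_rpow_sub_sub_one_rpow _ hq.le, hrpow,
    invTriadProfile]
  ring

lemma tendsto_invTriadBracket_div_rpow (l : ℝ) :
    Tendsto (fun q => invTriadBracket l q / q ^ (l - 1)) atTop
      (𝓝 (2 * l * (l + 1) * (l + 2) / 3)) := by
  have hinv : Tendsto (fun q : ℝ => q⁻¹) atTop (𝓝[≠] 0) :=
    tendsto_inv_atTop_nhdsGT_zero.mono_right (nhdsGT_le_nhdsNE 0)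
  refine ((tendsto_invTriadProfile_div_cube l).comp hinv).congr' ?_
  filter_upwards [eventually_gt_atTop 1] with q hq
  have hq_pos : 0 < q := by linarith
  have hrpow : q ^ (l + 2) = q ^ (l - 1) * q ^ 3 := by
    rw [← Real.rpow_add_natCast hq_pos.ne', Nat.cast_ofNat]
    congr 1
    ring
  rw [Function.comp_apply, invTriadBracket_eq_rpow_mul_profile l hq, hrpow]
  field_simp

theorem invTriadF_classical_limit_at_top_general {l : ℝ} (hl : 0 < l * (l + 1) * (l + 2))
    (hl_ne : l ≠ 1) :
    Tendsto (fun q : ℝ => q * invTriadF l q) atTop (𝓝 1) := by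
  set c := 2 * l * (l + 1) * (l + 2) / 3 with hc_def
  have hc : 0 < c := by linarith
  have hexp : (l - 1) * (1 / (1 - l)) = -1 := by
    rw [mul_one_div, ← neg_sub 1 l, neg_div, div_self (sub_ne_zero.mpr hl_ne.symm)]
  have hcancel : c ^ (1 / (l - 1)) * c ^ (1 / (1 - l)) = 1 := by
    rw [← Real.rpow_add hc, ← neg_sub 1 l, one_div_neg_eq_neg_one_div, neg_add_cancel,
      Real.rpow_zero]
  have hbracket := tendsto_rpow_div_rpow_mul (1 / (1 - l)) hc (tendsto_invTriadBracket_div_rpow l)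
  rw [hexp] at hbracket
  have hlim := hbracket.const_mul (c ^ (1 / (l - 1)))
  rw [hcancel] at hlim
  refine hlim.congr fun q => ?_
  rw [Real.rpow_neg_one, div_inv_eq_mul, invTriadF, ← hc_def, ← invTriadBracket]
  ring

/-- For every 0 < l < 1, lim_{q→∞} q·F_l(q) = 1: for large arguments the
inverse-triad eigenvalue function reproduces the classical inverse q⁻¹. -/
theorem invTriadF_classical_limit_at_top (l : ℝ) (hl0 : 0 < l) (hl1 : l < 1) :
    Filter.Tendsto (fun q : ℝ => q * invTriadF l q) Filter.atTop (nhds 1) := by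
  exact invTriadF_classical_limit_at_top_general (by positivity) hl1.ne
end

section
/- Let L ≥ 2 and μ, ν > 0. Define D = μ^{−3L}(ν² + ν^{−2}) + μ^{−6}(ν^L + ν^{−L}) + (ν^{L−2} + ν^{−(L−2)}), a₊ = 2(L−1)μ^{−3L}(ν² + ν^{−2}) + (4−L)μ^{−6}(ν^L + ν^{−L}) − (L+2)(ν^{L−2} + ν^{−(L−2)}), and a₋ = 2μ^{−3L}(ν² − ν^{−2}) + Lμ^{−6}(ν^L − ν^{−L}) + (L−2)(ν^{L−2} − ν^{−(L−2)}). Then a₊² + a₋² < 4(L+2)²D², and consequently for every φ ∈ ℝ the eigenvalue λ = (1/√3)[2(L+2) − (a₊/D)cos φ + (a₋/D)sin φ] is strictly positive. -/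
/-!
The complex number `aP + i aM` is a combination, with positive weights of total `D`, of six fixed
vectors depending only on `L`. For `0 ≤ L` these lie in the closed disc of radius `2 (L + 2)`, and
the first lies in its interior, so the triangle inequality gives `‖aP + i aM‖ < 2 (L + 2) D`. Up to
positive factors, the eigenvalue is `2 (L + 2) D - Re ((aP + i aM) e^{iφ})`, which is therefore
positive.
-/

open Finset

theorem norm_sum_smul_lt {ι E : Type*} [SeminormedAddCommGroup E] [NormedSpace ℝ E]
    {s : Finset ι} {w : ι → ℝ} {v : ι → E} {K : ℝ} (hw : ∀ i ∈ s, 0 ≤ w i)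
    (hv : ∀ i ∈ s, ‖v i‖ ≤ K) (hlt : ∃ i ∈ s, 0 < w i ∧ ‖v i‖ < K) :
    ‖∑ i ∈ s, w i • v i‖ < K * ∑ i ∈ s, w i := by
  obtain ⟨j, hj, hwj, hvj⟩ := hlt
  calc
    ‖∑ i ∈ s, w i • v i‖ ≤ ∑ i ∈ s, w i * ‖v i‖ :=
      norm_sum_le_of_le s fun i hi => (norm_smul_of_nonneg (hw i hi) (v i)).le
    _ < ∑ i ∈ s, w i * K :=
      sum_lt_sum (fun i hi => mul_le_mul_of_nonneg_left (hv i hi) (hw i hi))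
        ⟨j, hj, mul_lt_mul_of_pos_left hvj hwj⟩
    _ = K * ∑ i ∈ s, w i := by rw [← sum_mul, mul_comm]

theorem re_mul_cos_sub_im_mul_sin_le_norm (z : ℂ) (φ : ℝ) :
    z.re * Real.cos φ - z.im * Real.sin φ ≤ ‖z‖ := by
  simpa [Complex.exp_ofReal_mul_I_re, Complex.exp_ofReal_mul_I_im] using
    Complex.re_le_norm (z * Complex.exp (φ * Complex.I))

theorem pos_sub_re_div_mul_cos_add_im_div_mul_sin {z : ℂ} {K D : ℝ} (hD : 0 < D)
    (hz : ‖z‖ < K * D) (φ : ℝ) :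
    0 < K - z.re / D * Real.cos φ + z.im / D * Real.sin φ := by
  have hnum : 0 < K * D - (z.re * Real.cos φ - z.im * Real.sin φ) :=
    sub_pos.2 ((re_mul_cos_sub_im_mul_sin_le_norm z φ).trans_lt hz)
  calc
    0 < (K * D - (z.re * Real.cos φ - z.im * Real.sin φ)) / D := div_pos hnum hD
    _ = K - z.re / D * Real.cos φ + z.im / D * Real.sin φ := by
      field_simp
      ring

/-- The coefficients with which the six monomials of `D` enter `aP` (real part) and `aM` (imaginary
part), so that `aP + i aM = ∑ i, nearWeight L μ ν i • nearDirection L i`. -/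
def nearDirection (L : ℝ) : Fin 6 → ℂ :=
  ![⟨2 * (L - 1), 2⟩, ⟨2 * (L - 1), -2⟩, ⟨4 - L, L⟩, ⟨4 - L, -L⟩,
    ⟨-(L + 2), L - 2⟩, ⟨-(L + 2), -(L - 2)⟩]

/-- The six monomials in `μ` and `ν` whose sum is `D`, the near potential on the Kasner solution up
to a common factor, in the order of `nearDirection`. -/
noncomputable def nearWeight (L μ ν : ℝ) : Fin 6 → ℝ :=
  ![μ ^ (-(3 * L)) * ν ^ (2 : ℝ), μ ^ (-(3 * L)) * ν ^ (-(2 : ℝ)),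
    μ ^ (-(6 : ℝ)) * ν ^ L, μ ^ (-(6 : ℝ)) * ν ^ (-L), ν ^ (L - 2), ν ^ (-(L - 2))]

theorem nearWeight_pos (L : ℝ) {μ ν : ℝ} (hμ : 0 < μ) (hν : 0 < ν) (i : Fin 6) :
    0 < nearWeight L μ ν i := by
  fin_cases i <;> simp only [nearWeight, Matrix.cons_val, Fin.reduceFinMk] <;> positivity

theorem norm_nearDirection_le {L : ℝ} (hL : 0 ≤ L) (i : Fin 6) :
    ‖nearDirection L i‖ ≤ 2 * (L + 2) := by
  rw [← sq_le_sq₀ (norm_nonneg _) (by positivity), Complex.sq_norm, Complex.normSq_apply]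
  fin_cases i <;> simp only [nearDirection, Matrix.cons_val, Fin.reduceFinMk] <;> nlinarith

theorem norm_nearDirection_zero_lt {L : ℝ} (hL : 0 ≤ L) :
    ‖nearDirection L 0‖ < 2 * (L + 2) := by
  rw [← sq_lt_sq₀ (norm_nonneg _) (by positivity), Complex.sq_norm, Complex.normSq_apply]
  simp only [nearDirection, Matrix.cons_val]
  linarith

theorem norm_sum_smul_nearDirection_lt {L : ℝ} (hL : 0 ≤ L) {w : Fin 6 → ℝ}
    (hw : ∀ i, 0 ≤ w i) (hw0 : 0 < w 0) :
    ‖∑ i, w i • nearDirection L i‖ < 2 * (L + 2) * ∑ i, w i :=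
  norm_sum_smul_lt (fun i _ => hw i) (fun i _ => norm_nearDirection_le hL i)
    ⟨0, mem_univ 0, hw0, norm_nearDirection_zero_lt hL⟩

theorem kasner_stability_eigenvalue_positive_general
    (L μ ν : ℝ) (hL : 0 ≤ L) (hμ : 0 < μ) (hν : 0 < ν)
    (D aP aM : ℝ)
    (hD : D = μ ^ (-(3 * L)) * (ν ^ (2 : ℝ) + ν ^ (-(2 : ℝ)))
        + μ ^ (-(6 : ℝ)) * (ν ^ L + ν ^ (-L))
        + (ν ^ (L - 2) + ν ^ (-(L - 2))))
    (haP : aP = 2 * (L - 1) * μ ^ (-(3 * L)) * (ν ^ (2 : ℝ) + ν ^ (-(2 : ℝ)))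
        + (4 - L) * μ ^ (-(6 : ℝ)) * (ν ^ L + ν ^ (-L))
        - (L + 2) * (ν ^ (L - 2) + ν ^ (-(L - 2))))
    (haM : aM = 2 * μ ^ (-(3 * L)) * (ν ^ (2 : ℝ) - ν ^ (-(2 : ℝ)))
        + L * μ ^ (-(6 : ℝ)) * (ν ^ L - ν ^ (-L))
        + (L - 2) * (ν ^ (L - 2) - ν ^ (-(L - 2)))) :
    aP ^ 2 + aM ^ 2 < 4 * (L + 2) ^ 2 * D ^ 2
      ∧ ∀ φ : ℝ, 0 < (1 / Real.sqrt 3) *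
          (2 * (L + 2) - (aP / D) * Real.cos φ + (aM / D) * Real.sin φ) := by
  have hD_sum : D = ∑ i, nearWeight L μ ν i := by
    simp only [hD, nearWeight, Fin.sum_univ_six, Matrix.cons_val]
    ring
  have ha_sum : (⟨aP, aM⟩ : ℂ) = ∑ i, nearWeight L μ ν i • nearDirection L i := by
    apply Complex.ext <;>
    · simp only [haP, haM, nearWeight, nearDirection, Fin.sum_univ_six, Matrix.cons_val,
        Complex.add_re, Complex.add_im, Complex.smul_re, Complex.smul_im, smul_eq_mul]
      ring
  have hw_pos := nearWeight_pos L hμ hν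
  have hD_pos : 0 < D := hD_sum ▸ sum_pos (fun i _ => hw_pos i) univ_nonempty
  have hnorm : ‖(⟨aP, aM⟩ : ℂ)‖ < 2 * (L + 2) * D := by
    rw [ha_sum, hD_sum]
    exact norm_sum_smul_nearDirection_lt hL (fun i => (hw_pos i).le) (hw_pos 0)
  refine ⟨?_, fun φ => mul_pos (by positivity)
    (pos_sub_re_div_mul_cos_add_im_div_mul_sin hD_pos hnorm φ)⟩
  calc
    aP ^ 2 + aM ^ 2 = ‖(⟨aP, aM⟩ : ℂ)‖ ^ 2 := by
      rw [Complex.sq_norm, Complex.normSq_mk]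
      ring
    _ < (2 * (L + 2) * D) ^ 2 := pow_lt_pow_left₀ hnorm (norm_nonneg _) two_ne_zero
    _ = 4 * (L + 2) ^ 2 * D ^ 2 := by ring

/-- Stability of the Kasner solution under the near-regime effective potential:
for L ≥ 2 and μ, ν > 0, with D, aP, aM the quantities built from the logarithmic
derivatives of the near potential evaluated on the Kasner solution, one has
aP² + aM² < 4(L+2)²D², and consequently the stability eigenvalue
λ = (1/√3)[2(L+2) − (aP/D)cos φ + (aM/D)sin φ] is strictly positive for all φ. -/
theorem kasner_stability_eigenvalue_positive
    (L μ ν : ℝ) (hL : 2 ≤ L) (hμ : 0 < μ) (hν : 0 < ν)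
    (D aP aM : ℝ)
    (hD : D = μ ^ (-(3 * L)) * (ν ^ (2 : ℝ) + ν ^ (-(2 : ℝ)))
        + μ ^ (-(6 : ℝ)) * (ν ^ L + ν ^ (-L))
        + (ν ^ (L - 2) + ν ^ (-(L - 2))))
    (haP : aP = 2 * (L - 1) * μ ^ (-(3 * L)) * (ν ^ (2 : ℝ) + ν ^ (-(2 : ℝ)))
        + (4 - L) * μ ^ (-(6 : ℝ)) * (ν ^ L + ν ^ (-L))
        - (L + 2) * (ν ^ (L - 2) + ν ^ (-(L - 2))))
    (haM : aM = 2 * μ ^ (-(3 * L)) * (ν ^ (2 : ℝ) - ν ^ (-(2 : ℝ)))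
        + L * μ ^ (-(6 : ℝ)) * (ν ^ L - ν ^ (-L))
        + (L - 2) * (ν ^ (L - 2) - ν ^ (-(L - 2)))) :
    aP ^ 2 + aM ^ 2 < 4 * (L + 2) ^ 2 * D ^ 2
      ∧ ∀ φ : ℝ, 0 < (1 / Real.sqrt 3) *
          (2 * (L + 2) - (aP / D) * Real.cos φ + (aM / D) * Real.sin φ) := by
  exact kasner_stability_eigenvalue_positive_general L μ ν (by linarith) hμ hν D aP aM hD haP haM
end

section
/- Let k > 0 and let q⁰, π₀, π₊, π₋, W : ℝ → ℝ be differentiable functions satisfying, for all t, dq⁰/dt = −2π₀(t), dπ₀/dt = −2kW(t), and the constraint −π₀(t)² + (1/2)(π₊(t)² + π₋(t)²) + 2W(t) = 0. Then d/dt[π₀(t)e^{−kq⁰(t)/2}] = (k/2)e^{−kq⁰(t)/2}(π₊(t)² + π₋(t)²) ≥ 0; in particular, if π₀(t₀) > 0 for some t₀, then π₀(t) > 0 for all t ≥ t₀, so once the volume decreases it can never turn around (no bounce). -/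
/-!
Eliminating `W` with the constraint gives `π̇₀ = -k π₀² + (k/2) (π₊² + π₋²)`. Since `q̇⁰ = -2 π₀`,
the quadratic term is `(k/2) q̇⁰ π₀`, so the equation is linear in `π₀` with integrating factor
`exp (-k q⁰ / 2)` and a nonnegative source.
-/

theorem pos_of_monotone_mul_of_pos {α M : Type*} [Preorder α] [MulZeroClass M] [Preorder M]
    [MulPosStrictMono M] [MulPosReflectLT M] {f w : α → M} {a b : α} (hw : ∀ x, 0 < w x)
    (hmono : Monotone fun x => f x * w x) (hab : a ≤ b) (ha : 0 < f a) : 0 < f b := by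
  have weighted_pos : 0 < f b * w b :=
    calc
      0 < f a * w a := (mul_pos_iff_of_pos_right (hw a)).2 ha
      _ ≤ f b * w b := hmono hab
  exact (mul_pos_iff_of_pos_right (hw b)).1 weighted_pos

theorem hasDerivAt_mul_exp {f g : ℝ → ℝ} {f' g' t : ℝ} (hf : HasDerivAt f f' t)
    (hg : HasDerivAt g g' t) :
    HasDerivAt (fun s => f s * Real.exp (g s)) ((f' + f t * g') * Real.exp (g t)) t :=
  (hf.fun_mul hg.exp).congr_deriv (by ring)

theorem hasDerivAt_momentum_mul_exp_of_constraint {k W K t : ℝ} {q p : ℝ → ℝ}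
    (hq : HasDerivAt q (-2 * p t) t) (hp : HasDerivAt p (-2 * k * W) t)
    (hconstraint : -(p t) ^ 2 + (1 / 2) * K + 2 * W = 0) :
    HasDerivAt (fun s => p s * Real.exp (-k * q s / 2))
      ((k / 2) * Real.exp (-k * q t / 2) * K) t := by
  have hexponent : HasDerivAt (fun s => -k * q s / 2) (k * p t) t :=
    ((hq.const_mul (-k)).div_const 2).congr_deriv (by ring)
  have source_eq : -2 * k * W + p t * (k * p t) = (k / 2) * K := by
    linear_combination -k * hconstraint
  exact (hasDerivAt_mul_exp hp hexponent).congr_deriv (by rw [source_eq]; ring)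

/-- No bounce in a factorizing regime: if q̇⁰ = −2π₀, π̇₀ = −2kW with k > 0, and
the constraint −π₀² + (1/2)(π₊² + π₋²) + 2W = 0 holds, then
d/dt[π₀ e^{−kq⁰/2}] = (k/2)e^{−kq⁰/2}(π₊² + π₋²) ≥ 0; in particular once
π₀ > 0 (the volume decreases) it stays positive, so the volume can never
turn around. -/
theorem no_bounce_in_factorizing_regime
    (k : ℝ) (hk : 0 < k)
    (q0 p0 pp pm W : ℝ → ℝ)
    (hq0 : ∀ t, HasDerivAt q0 (-2 * p0 t) t)
    (hp0 : ∀ t, HasDerivAt p0 (-2 * k * W t) t)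
    (hconstraint : ∀ t, -(p0 t) ^ 2 + (1/2) * ((pp t) ^ 2 + (pm t) ^ 2)
        + 2 * W t = 0) :
    (∀ t, HasDerivAt (fun s => p0 s * Real.exp (-k * q0 s / 2))
        ((k / 2) * Real.exp (-k * q0 t / 2) * ((pp t) ^ 2 + (pm t) ^ 2)) t
      ∧ 0 ≤ (k / 2) * Real.exp (-k * q0 t / 2) * ((pp t) ^ 2 + (pm t) ^ 2))
    ∧ ∀ t₀, 0 < p0 t₀ → ∀ t, t₀ ≤ t → 0 < p0 t := by
  have hderiv t := hasDerivAt_momentum_mul_exp_of_constraint (hq0 t) (hp0 t) (hconstraint t)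
  have hnonneg (t : ℝ) :
      0 ≤ (k / 2) * Real.exp (-k * q0 t / 2) * ((pp t) ^ 2 + (pm t) ^ 2) := by
    positivity
  have hmono : Monotone fun s => p0 s * Real.exp (-k * q0 s / 2) :=
    monotone_of_hasDerivAt_nonneg hderiv hnonneg
  exact ⟨fun t => ⟨hderiv t, hnonneg t⟩, fun _ hpos _ hle =>
    pos_of_monotone_mul_of_pos (fun _ => Real.exp_pos _) hmono hle hpos⟩
end

section
/- Let σ ∈ ℝ², ρ > 0 with ‖σ‖² ≤ 2ρ², and v ∈ ℝ² with ‖v‖² > 1/2. Then σ·v + 2ρ‖v‖² > 0. Consequently, if v : I → ℝ² is differentiable on an interval I with v'(t) = (‖v(t)‖² − 1/2)(σ/2 + ρv(t)) and ‖v(t)‖² > 1/2 for all t ∈ I, then d/dt‖v(t)‖² = (‖v(t)‖² − 1/2)(σ·v(t) + 2ρ‖v(t)‖²) > 0, i.e. ‖v‖² is strictly increasing on I. -/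
open scoped RealInnerProductSpace

section

variable {E : Type*} [NormedAddCommGroup E] [InnerProductSpace ℝ E] {σ : E} {ρ : ℝ}

theorem inner_add_mul_norm_sq_pos_of_norm_lt {c : ℝ} {v : E} (h : ‖σ‖ < c * ‖v‖) :
    0 < ⟪σ, v⟫ + c * ‖v‖ ^ 2 := by
  have v_ne_zero : v ≠ 0 := by
    rintro rfl
    simp only [norm_zero, mul_zero] at h
    exact (norm_nonneg σ).not_gt h
  have inner_lower_bound : -(c * ‖v‖ ^ 2) < ⟪σ, v⟫ := calc
    -(c * ‖v‖ ^ 2) = -(c * ‖v‖ * ‖v‖) := by ring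
    _ < -(‖σ‖ * ‖v‖) := neg_lt_neg (mul_lt_mul_of_pos_right h (norm_pos_iff.mpr v_ne_zero))
    _ ≤ ⟪σ, v⟫ := neg_le_of_abs_le (abs_real_inner_le_norm σ v)
  linarith

theorem inner_add_two_mul_mul_norm_sq_pos (hρ : 0 < ρ) (hσ : ‖σ‖ ^ 2 ≤ 2 * ρ ^ 2) {v : E}
    (hv : 1 / 2 < ‖v‖ ^ 2) : 0 < ⟪σ, v⟫ + 2 * ρ * ‖v‖ ^ 2 := by
  refine inner_add_mul_norm_sq_pos_of_norm_lt (lt_of_pow_lt_pow_left₀ 2 (by positivity) ?_)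
  calc
    ‖σ‖ ^ 2 ≤ 4 * ρ ^ 2 * (1 / 2) := by linarith
    _ < 4 * ρ ^ 2 * ‖v‖ ^ 2 := by gcongr
    _ = (2 * ρ * ‖v‖) ^ 2 := by ring

theorem hasDerivAt_norm_sq_of_hasDerivAt_smul_add {v : ℝ → E} {a t : ℝ}
    (hv : HasDerivAt v (a • ((1 / 2 : ℝ) • σ + ρ • v t)) t) :
    HasDerivAt (fun s => ‖v s‖ ^ 2) (a * (⟪σ, v t⟫ + 2 * ρ * ‖v t‖ ^ 2)) t := by
  refine hv.norm_sq.congr_deriv ?_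
  rw [real_inner_smul_right, inner_add_right, real_inner_smul_right, real_inner_smul_right,
    real_inner_self_eq_norm_sq, real_inner_comm]
  ring

theorem effective_velocity_norm_increasing_general
    (hρ : 0 < ρ) (hσ : ‖σ‖ ^ 2 ≤ 2 * ρ ^ 2) :
    (∀ v : E, 1 / 2 < ‖v‖ ^ 2 → 0 < ⟪σ, v⟫ + 2 * ρ * ‖v‖ ^ 2)
    ∧ ∀ (I : Set ℝ) (_ : I.OrdConnected) (v : ℝ → E),
        (∀ t ∈ I, HasDerivAt v
            ((‖v t‖ ^ 2 - 1 / 2) • ((1 / 2 : ℝ) • σ + ρ • v t)) t) →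
        (∀ t ∈ I, 1 / 2 < ‖v t‖ ^ 2) →
        (∀ t ∈ I, HasDerivAt (fun s => ‖v s‖ ^ 2)
            ((‖v t‖ ^ 2 - 1 / 2) * (⟪σ, v t⟫ + 2 * ρ * ‖v t‖ ^ 2)) t
          ∧ 0 < (‖v t‖ ^ 2 - 1 / 2) * (⟪σ, v t⟫ + 2 * ρ * ‖v t‖ ^ 2))
        ∧ StrictMonoOn (fun s => ‖v s‖ ^ 2) I := by
  refine ⟨fun v => inner_add_two_mul_mul_norm_sq_pos hρ hσ, fun I hI v hv hnorm => ?_⟩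
  have norm_sq_hasDerivAt t (ht : t ∈ I) := hasDerivAt_norm_sq_of_hasDerivAt_smul_add (hv t ht)
  have rate_pos : ∀ t ∈ I,
      0 < (‖v t‖ ^ 2 - 1 / 2) * (⟪σ, v t⟫ + 2 * ρ * ‖v t‖ ^ 2) := fun t ht =>
    mul_pos (sub_pos.mpr (hnorm t ht)) (inner_add_two_mul_mul_norm_sq_pos hρ hσ (hnorm t ht))
  refine ⟨fun t ht => ⟨norm_sq_hasDerivAt t ht, rate_pos t ht⟩, ?_⟩
  exact strictMonoOn_of_hasDerivWithinAt_pos hI.convex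
    (fun t ht => (norm_sq_hasDerivAt t ht).continuousAt.continuousWithinAt)
    (fun t ht => (norm_sq_hasDerivAt t (interior_subset ht)).hasDerivWithinAt)
    (fun t ht => rate_pos t (interior_subset ht))

end

/-- In the effective (loop-modified) asymptotic regime with ‖σ‖² ≤ 2ρ², one has
σ·v + 2ρ‖v‖² > 0 whenever ‖v‖² > 1/2; consequently, along any solution of
v' = (‖v‖² − 1/2)(σ/2 + ρv) that stays in the region ‖v‖² > 1/2, the quantity
‖v‖² has derivative (‖v‖² − 1/2)(σ·v + 2ρ‖v‖²) > 0 and is strictly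
increasing. -/
theorem effective_velocity_norm_increasing
    (σ : EuclideanSpace ℝ (Fin 2)) (ρ : ℝ) (hρ : 0 < ρ)
    (hσ : ‖σ‖ ^ 2 ≤ 2 * ρ ^ 2) :
    (∀ v : EuclideanSpace ℝ (Fin 2), 1 / 2 < ‖v‖ ^ 2 →
        0 < ⟪σ, v⟫ + 2 * ρ * ‖v‖ ^ 2)
    ∧ ∀ (I : Set ℝ) (_ : I.OrdConnected) (v : ℝ → EuclideanSpace ℝ (Fin 2)),
        (∀ t ∈ I, HasDerivAt v
            ((‖v t‖ ^ 2 - 1 / 2) • ((1 / 2 : ℝ) • σ + ρ • v t)) t) →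
        (∀ t ∈ I, 1 / 2 < ‖v t‖ ^ 2) →
        (∀ t ∈ I, HasDerivAt (fun s => ‖v s‖ ^ 2)
            ((‖v t‖ ^ 2 - 1 / 2) * (⟪σ, v t⟫ + 2 * ρ * ‖v t‖ ^ 2)) t
          ∧ 0 < (‖v t‖ ^ 2 - 1 / 2) * (⟪σ, v t⟫ + 2 * ρ * ‖v t‖ ^ 2))
        ∧ StrictMonoOn (fun s => ‖v s‖ ^ 2) I :=
  effective_velocity_norm_increasing_general hρ hσ
end

section
/- Let σ ∈ ℝ², ρ > 0 and let v : I → ℝ² be differentiable on an interval I with v'(t) = (‖v(t)‖² − 1/2)(σ/2 + ρv(t)). Then the planar cross product N(t) := σ₁v₂(t) − σ₂v₁(t) satisfies the linear equation N'(t) = ρ(‖v(t)‖² − 1/2)N(t); in particular, if N(t₀) = 0 for some t₀ ∈ I then N ≡ 0 on I, and otherwise N never changes sign on I. -/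
/-!
Differentiating `σ × v` along the equation kills the part of `v'` parallel to `σ`, which leaves the
scalar linear equation `N' = g N` with `g = ρ(‖v‖² − 1/2)`. The integrating factor `exp (-∫ g)` then
gives `N t = exp (∫ₛᵗ g) * N s`, so all values of `N` are positive multiples of one another.
-/

open Set
open scoped Interval

section LinearODE

variable {E : Type*} [NormedAddCommGroup E] [NormedSpace ℝ E] {g : ℝ → ℝ} {I : Set ℝ} {s t : ℝ}

lemma hasDerivWithinAt_integral_uIcc [CompleteSpace E] {f : ℝ → E} (hf : ContinuousOn f [[s, t]])
    {u : ℝ} (hu : u ∈ [[s, t]]) :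
    HasDerivWithinAt (fun x ↦ ∫ τ in s..x, f τ) (f u) [[s, t]] u := by
  have : Fact (u ∈ [[s, t]]) := ⟨hu⟩
  have integrable : IntervalIntegrable f MeasureTheory.volume s u :=
    (hf.mono (uIcc_subset_uIcc_left hu)).intervalIntegrable
  exact intervalIntegral.integral_hasDerivWithinAt_right integrable
    (hf.stronglyMeasurableAtFilter_nhdsWithin measurableSet_uIcc u) (hf u hu)

theorem eq_exp_integral_smul_of_hasDerivWithinAt_uIcc {y : ℝ → E} (hg : ContinuousOn g [[s, t]])
    (hy : ∀ u ∈ [[s, t]], HasDerivWithinAt y (g u • y u) [[s, t]] u) :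
    y t = Real.exp (∫ τ in s..t, g τ) • y s := by
  set G : ℝ → ℝ := fun x ↦ ∫ τ in s..x, g τ
  have deriv_zero : ∀ u ∈ [[s, t]],
      HasDerivWithinAt (fun x ↦ Real.exp (-G x) • y x) 0 [[s, t]] u := fun u hu ↦
    ((hasDerivWithinAt_integral_uIcc hg hu).fun_neg.exp.smul (hy u hu)).congr_deriv (by module)
  have const : Real.exp (-G t) • y t = y s := by
    have h := (convex_uIcc s t).norm_image_sub_le_of_norm_hasDerivWithin_le (C := 0) deriv_zero
      (by simp) left_mem_uIcc right_mem_uIcc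
    simpa [G, sub_eq_zero] using h
  rw [← const, smul_smul, ← Real.exp_add, add_neg_cancel, Real.exp_zero, one_smul]

theorem eq_exp_integral_smul_of_hasDerivWithinAt {y : ℝ → E} (hI : I.OrdConnected)
    (hg : ContinuousOn g I) (hy : ∀ u ∈ I, HasDerivWithinAt y (g u • y u) I u)
    (hs : s ∈ I) (ht : t ∈ I) : y t = Real.exp (∫ τ in s..t, g τ) • y s :=
  have hst : [[s, t]] ⊆ I := hI.uIcc_subset hs ht
  eq_exp_integral_smul_of_hasDerivWithinAt_uIcc (hg.mono hst) fun u hu ↦ (hy u (hst hu)).mono hst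

theorem eq_zero_of_hasDerivWithinAt_smul_self {y : ℝ → E} (hI : I.OrdConnected)
    (hg : ContinuousOn g I) (hy : ∀ u ∈ I, HasDerivWithinAt y (g u • y u) I u)
    (hs : s ∈ I) (hys : y s = 0) (ht : t ∈ I) : y t = 0 := by
  rw [eq_exp_integral_smul_of_hasDerivWithinAt hI hg hy hs ht, hys, smul_zero]

theorem mul_pos_of_hasDerivWithinAt_mul_self {y : ℝ → ℝ} (hI : I.OrdConnected)
    (hg : ContinuousOn g I) (hy : ∀ u ∈ I, HasDerivWithinAt y (g u * y u) I u)
    (hs : s ∈ I) (hys : y s ≠ 0) (ht : t ∈ I) : 0 < y t * y s := by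
  rw [eq_exp_integral_smul_of_hasDerivWithinAt hI hg hy hs ht, smul_eq_mul, mul_assoc]
  exact mul_pos (Real.exp_pos _) (mul_self_pos.2 hys)

end LinearODE

section Annihilator

variable {E : Type*} [NormedAddCommGroup E] [NormedSpace ℝ E] {ℓ : StrongDual ℝ E} {w : E}

lemma hasDerivAt_dual_apply_of_apply_eq_zero (hw : ℓ w = 0) {v : ℝ → E} {a b t : ℝ}
    (hv : HasDerivAt v (a • w + b • v t) t) : HasDerivAt (fun u ↦ ℓ (v u)) (b * ℓ (v t)) t :=
  (ℓ.hasFDerivAt.comp_hasDerivAt t hv).congr_deriv (by simp [hw])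

theorem cross_product_linear_equation_general (hw : ℓ w = 0) {I : Set ℝ} (hI : I.OrdConnected)
    {a b : ℝ → ℝ} (hb : ContinuousOn b I) {v : ℝ → E}
    (hv : ∀ t ∈ I, HasDerivAt v (a t • w + b t • v t) t) :
    (∀ t ∈ I, HasDerivAt (fun u ↦ ℓ (v u)) (b t * ℓ (v t)) t)
    ∧ (∀ t₀ ∈ I, ℓ (v t₀) = 0 → ∀ t ∈ I, ℓ (v t) = 0)
    ∧ (∀ t₀ ∈ I, ℓ (v t₀) ≠ 0 → ∀ t ∈ I, 0 < ℓ (v t) * ℓ (v t₀)) := by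
  have linear : ∀ t ∈ I, HasDerivAt (fun u ↦ ℓ (v u)) (b t * ℓ (v t)) t := fun t ht ↦
    hasDerivAt_dual_apply_of_apply_eq_zero hw (hv t ht)
  have linear_within t (ht : t ∈ I) := (linear t ht).hasDerivWithinAt (s := I)
  exact ⟨linear,
    fun _ ht₀ h _ ht ↦ eq_zero_of_hasDerivWithinAt_smul_self hI hb linear_within ht₀ h ht,
    fun _ ht₀ h _ ht ↦ mul_pos_of_hasDerivWithinAt_mul_self hI hb linear_within ht₀ h ht⟩

end Annihilator

/-- The planar cross product `σ × ·` with a fixed left factor, as a continuous linear functional;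
the coordinates `σ₁, σ₂` of the plane are `σ 0, σ 1`. -/
noncomputable def planarCross (σ : EuclideanSpace ℝ (Fin 2)) :
    StrongDual ℝ (EuclideanSpace ℝ (Fin 2)) :=
  σ 0 • EuclideanSpace.proj 1 - σ 1 • EuclideanSpace.proj 0

lemma planarCross_apply (σ x : EuclideanSpace ℝ (Fin 2)) :
    planarCross σ x = σ 0 * x 1 - σ 1 * x 0 := rfl

lemma planarCross_self (σ : EuclideanSpace ℝ (Fin 2)) : planarCross σ σ = 0 := by
  rw [planarCross_apply, mul_comm, sub_self]

/-- Along a solution of v' = (‖v‖² − 1/2)(σ/2 + ρv) on an interval I, the planar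
cross product N = σ₁v₂ − σ₂v₁ satisfies the linear equation
N' = ρ(‖v‖² − 1/2)N; in particular if N vanishes somewhere on I it vanishes
identically on I, and otherwise it never changes sign on I. -/
theorem cross_product_linear_equation
    (σ : EuclideanSpace ℝ (Fin 2)) (ρ : ℝ) (hρ : 0 < ρ)
    (I : Set ℝ) (hI : I.OrdConnected) (v : ℝ → EuclideanSpace ℝ (Fin 2))
    (hv : ∀ t ∈ I, HasDerivAt v
        ((‖v t‖ ^ 2 - 1 / 2) • ((1 / 2 : ℝ) • σ + ρ • v t)) t)
    (N : ℝ → ℝ) (hN : ∀ t, N t = σ 0 * v t 1 - σ 1 * v t 0) :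
    (∀ t ∈ I, HasDerivAt N (ρ * (‖v t‖ ^ 2 - 1 / 2) * N t) t)
    ∧ (∀ t₀ ∈ I, N t₀ = 0 → ∀ t ∈ I, N t = 0)
    ∧ (∀ t₀ ∈ I, N t₀ ≠ 0 → ∀ t ∈ I, 0 < N t * N t₀) := by
  obtain rfl : N = fun t ↦ planarCross σ (v t) := funext hN
  have hv_cont : ContinuousOn v I := fun t ht ↦ (hv t ht).continuousAt.continuousWithinAt
  exact cross_product_linear_equation_general (planarCross_self σ) hI
    (a := fun t ↦ (‖v t‖ ^ 2 - 1 / 2) * (1 / 2)) (b := fun t ↦ ρ * (‖v t‖ ^ 2 - 1 / 2))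
    (by fun_prop) fun t ht ↦ (hv t ht).congr_deriv (by module)
end

section
/- Let ρ > 0, σ ∈ ℝ² and v* ∈ ℝ² with ‖v*‖² = 1/2, and let M : ℝ² → ℝ² be the linear map M(u) = (v*·u)(σ + 2ρv*). Then M has determinant 0 and trace equal to σ·v* + ρ. If moreover ‖σ‖² < 2ρ², then σ·v* + ρ > 0 for every such v*, so every Kasner fixed point on the circle ‖v‖² = 1/2 is linearly stable under the backward effective evolution, with no restriction on the asymptotic direction. -/
open scoped RealInnerProductSpace

theorem det_smulRight_eq_zero {K V : Type*} [Field K] [AddCommGroup V] [Module K V]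
    (hV : 1 < Module.finrank K V) (f : V →ₗ[K] K) (w : V) :
    LinearMap.det (f.smulRight w) = 0 := by
  have : FiniteDimensional K V := Module.finite_of_finrank_pos (zero_lt_one.trans hV)
  have ker_f_ne_bot : LinearMap.ker f ≠ ⊥ :=
    LinearMap.ker_ne_bot_of_finrank_lt (by rwa [Module.finrank_self])
  have ker_le : LinearMap.ker f ≤ LinearMap.ker (f.smulRight w) := fun u hu ↦ by
    rw [LinearMap.mem_ker] at hu ⊢
    rw [LinearMap.smulRight_apply, hu, zero_smul]
  exact LinearMap.det_eq_zero_iff_ker_ne_bot.mpr (ne_bot_of_le_ne_bot ker_f_ne_bot ker_le)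

section InnerProductSpace

variable {E : Type*} [NormedAddCommGroup E] [InnerProductSpace ℝ E]

theorem trace_innerₛₗ_smulRight_add_smul [FiniteDimensional ℝ E] (x v : E) (c : ℝ) :
    LinearMap.trace ℝ E ((innerₛₗ ℝ v).smulRight (x + c • v)) = ⟪x, v⟫ + c * ‖v‖ ^ 2 := by
  rw [LinearMap.trace_smulRight, innerₛₗ_apply_apply, inner_add_right, real_inner_smul_right,
    real_inner_self_eq_norm_sq, real_inner_comm]

theorem abs_real_inner_lt_of_norm_sq_mul_norm_sq_lt {x y : E} {r : ℝ} (hr : 0 ≤ r)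
    (h : ‖x‖ ^ 2 * ‖y‖ ^ 2 < r ^ 2) : |⟪x, y⟫| < r :=
  calc
    |⟪x, y⟫| ≤ ‖x‖ * ‖y‖ := abs_real_inner_le_norm x y
    _ < r := lt_of_pow_lt_pow_left₀ 2 hr (by rwa [mul_pow])

theorem kasner_fixed_points_all_stable_general (hE : 1 < Module.finrank ℝ E)
    (σ : E) (ρ : ℝ) (hρ : 0 < ρ) :
    (∀ vs : E, ‖vs‖ ^ 2 = 1 / 2 →
      ∀ M : E →ₗ[ℝ] E, (∀ u, M u = ⟪vs, u⟫ • (σ + (2 * ρ) • vs)) →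
        LinearMap.det M = 0 ∧ LinearMap.trace ℝ E M = ⟪σ, vs⟫ + ρ)
    ∧ (‖σ‖ ^ 2 < 2 * ρ ^ 2 → ∀ vs : E, ‖vs‖ ^ 2 = 1 / 2 → 0 < ⟪σ, vs⟫ + ρ) := by
  refine ⟨fun vs hvs M hM ↦ ?_, fun hσ vs hvs ↦ ?_⟩
  · have : FiniteDimensional ℝ E := Module.finite_of_finrank_pos (zero_lt_one.trans hE)
    obtain rfl : M = (innerₛₗ ℝ vs).smulRight (σ + (2 * ρ) • vs) := LinearMap.ext hM
    refine ⟨det_smulRight_eq_zero hE _ _, ?_⟩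
    rw [trace_innerₛₗ_smulRight_add_smul, hvs]
    ring
  · have abs_inner_lt : |⟪σ, vs⟫| < ρ :=
      abs_real_inner_lt_of_norm_sq_mul_norm_sq_lt hρ.le (by rw [hvs]; linarith)
    linarith [neg_lt_of_abs_lt abs_inner_lt]

end InnerProductSpace

/-- Linearization of the effective velocity dynamics at a Kasner fixed point
v* with ‖v*‖² = 1/2: the linear map M(u) = (v*·u)(σ + 2ρv*) has determinant 0
and trace σ·v* + ρ; and if ‖σ‖² < 2ρ², then σ·v* + ρ > 0 for every v* on the
Kasner circle, so every Kasner fixed point is linearly stable under the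
backward effective evolution, with no restriction on the asymptotic
direction. -/
theorem kasner_fixed_points_all_stable
    (σ : EuclideanSpace ℝ (Fin 2)) (ρ : ℝ) (hρ : 0 < ρ) :
    (∀ (vs : EuclideanSpace ℝ (Fin 2)), ‖vs‖ ^ 2 = 1 / 2 →
      ∀ (M : EuclideanSpace ℝ (Fin 2) →ₗ[ℝ] EuclideanSpace ℝ (Fin 2)),
        (∀ u, M u = ⟪vs, u⟫ • (σ + (2 * ρ) • vs)) →
          LinearMap.det M = 0
          ∧ LinearMap.trace ℝ _ M = ⟪σ, vs⟫ + ρ)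
    ∧ (‖σ‖ ^ 2 < 2 * ρ ^ 2 →
        ∀ (vs : EuclideanSpace ℝ (Fin 2)), ‖vs‖ ^ 2 = 1 / 2 →
          0 < ⟪σ, vs⟫ + ρ) :=
  kasner_fixed_points_all_stable_general (by simp) σ ρ hρ
end

section
/- Let ρ > 0 and σ ∈ ℝ² with ‖σ‖² = 8ρ². Then: (i) the isolated fixed point v* = −σ/(2ρ) of the velocity ODE satisfies ‖v*‖² = 2, so it is inaccessible in the classically allowed region ‖v‖² < 1/2; (ii) for any v* ∈ ℝ² with ‖v*‖² = 1/2, the linear stability condition σ·v* + ρ > 0 is equivalent to cos φ* > −1/2, where cos φ* = σ·v*/(‖σ‖·‖v*‖), so in the classical case the asymptotic Kasner directions are restricted to |φ*| < 2π/3. -/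
open scoped RealInnerProductSpace

section FixedPoint

variable {E : Type*} [SeminormedAddCommGroup E] [NormedSpace ℝ E]

theorem norm_neg_inv_two_mul_smul_sq (ρ : ℝ) (σ : E) :
    ‖(-(2 * ρ)⁻¹ : ℝ) • σ‖ ^ 2 = ‖σ‖ ^ 2 / (4 * ρ ^ 2) := by
  rw [norm_smul, mul_pow, Real.norm_eq_abs, sq_abs]
  ring

end FixedPoint

section Stability

variable {E : Type*} [SeminormedAddCommGroup E]

theorem norm_mul_norm_eq_of_sq_mul_sq_eq {x y : E} {c : ℝ} (hc : 0 ≤ c)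
    (h : ‖x‖ ^ 2 * ‖y‖ ^ 2 = c ^ 2) : ‖x‖ * ‖y‖ = c := by
  rwa [← mul_pow, sq_eq_sq₀ (by positivity) hc] at h

variable [InnerProductSpace ℝ E]

theorem inner_add_pos_iff_neg_div_lt_inner_div {x y : E} (hxy : 0 < ‖x‖ * ‖y‖) (r : ℝ) :
    0 < ⟪x, y⟫ + r ↔ -(r / (‖x‖ * ‖y‖)) < ⟪x, y⟫ / (‖x‖ * ‖y‖) := by
  rw [← neg_div, div_lt_div_iff_of_pos_right hxy, neg_lt_iff_pos_add]

theorem inner_add_pos_iff_neg_one_div_lt_inner_div {σ v : E} {ρ k : ℝ} (hρ : 0 < ρ) (hk : 0 < k)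
    (hσ : ‖σ‖ ^ 2 = 2 * k ^ 2 * ρ ^ 2) (hv : ‖v‖ ^ 2 = 1 / 2) :
    0 < ⟪σ, v⟫ + ρ ↔ -(1 / k) < ⟪σ, v⟫ / (‖σ‖ * ‖v‖) := by
  have norm_mul_norm : ‖σ‖ * ‖v‖ = k * ρ :=
    norm_mul_norm_eq_of_sq_mul_sq_eq (by positivity) (by rw [hσ, hv]; ring)
  have ratio : ρ / (‖σ‖ * ‖v‖) = 1 / k := by
    rw [norm_mul_norm]
    field_simp
  rw [← ratio]
  exact inner_add_pos_iff_neg_div_lt_inner_div (by rw [norm_mul_norm]; positivity) ρ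

/-- The parameter `k` is the square root of the ratio `‖σ‖² / (2ρ²)`; the classical Bianchi IX
potential has `k = 2`. -/
theorem classical_case_restricted_stability_general (σ : E) (ρ k : ℝ) (hρ : 0 < ρ) (hk : 0 < k)
    (hσ : ‖σ‖ ^ 2 = 2 * k ^ 2 * ρ ^ 2) :
    ‖(-(2 * ρ)⁻¹ : ℝ) • σ‖ ^ 2 = k ^ 2 / 2
    ∧ ∀ v : E, ‖v‖ ^ 2 = 1 / 2 →
        (0 < ⟪σ, v⟫ + ρ ↔ -(1 / k) < ⟪σ, v⟫ / (‖σ‖ * ‖v‖)) := by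
  refine ⟨?_, fun v hv ↦ inner_add_pos_iff_neg_one_div_lt_inner_div hρ hk hσ hv⟩
  rw [norm_neg_inv_two_mul_smul_sq, hσ]
  field_simp
  norm_num

end Stability

/-- The classical case ‖σ‖² = 8ρ²: (i) the isolated fixed point v* = −σ/(2ρ)
has ‖v*‖² = 2, so it is inaccessible in the classically allowed region
‖v‖² < 1/2; (ii) for any v* with ‖v*‖² = 1/2, the stability condition
σ·v* + ρ > 0 is equivalent to cos φ* = σ·v*/(‖σ‖·‖v*‖) > −1/2, restricting the
asymptotic Kasner directions to |φ*| < 2π/3. -/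
theorem classical_case_restricted_stability
    (σ : EuclideanSpace ℝ (Fin 2)) (ρ : ℝ) (hρ : 0 < ρ)
    (hσ : ‖σ‖ ^ 2 = 8 * ρ ^ 2) :
    ‖(-(2 * ρ)⁻¹ : ℝ) • σ‖ ^ 2 = 2
    ∧ ∀ (vs : EuclideanSpace ℝ (Fin 2)), ‖vs‖ ^ 2 = 1 / 2 →
        (0 < ⟪σ, vs⟫ + ρ ↔ -(1 / 2) < ⟪σ, vs⟫ / (‖σ‖ * ‖vs‖)) := by
  convert classical_case_restricted_stability_general σ ρ 2 hρ two_pos (by rw [hσ]; ring) using 2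
  norm_num
end

section
/- Let σ ∈ ℝ² and ρ > 0 with ‖σ‖² ≤ 2ρ², and let v : (−∞, t₀] → ℝ² be differentiable with v'(t) = (‖v(t)‖² − 1/2)(σ/2 + ρv(t)) and ‖v(t)‖² > 1/2 for all t ≤ t₀. Then v(t) converges as t → −∞ to a limit v* ∈ ℝ² with ‖v*‖² = 1/2. In other words, every trajectory of the effective asymptotic Bianchi IX dynamics approaches a Kasner velocity as the volume goes to zero. -/
/-!
Put `w = v + (2ρ)⁻¹ σ`. The equation becomes `w' = g w` with the scalar `g = ρ (‖v‖² - 1/2) ≥ 0`. If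
`G` is a primitive of `g`, then `w t = exp (G t - G b) • w b`: the trajectory moves along a ray, and
the exponential factor, being nondecreasing and positive, converges as `t → -∞`. Hence `v`
converges, necessarily to an equilibrium. This is either a point with `‖v‖² = 1/2` or `-(2ρ)⁻¹ σ`;
the latter lies in the closed ball `‖v‖² ≤ 1/2`, while the limit satisfies `‖v‖² ≥ 1/2`.
-/

open Filter Set Topology

theorem exists_tendsto_atBot_of_monotoneOn_Iic {α β : Type*} [LinearOrder α]
    [ConditionallyCompleteLinearOrder β] [TopologicalSpace β] [OrderTopology β]
    {f : α → β} {b : α} (hf : MonotoneOn f (Iic b)) (hbdd : BddBelow (f '' Iic b)) :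
    ∃ l, Tendsto f atBot (𝓝 l) := by
  have hmono : Monotone fun t ↦ f (min t b) := fun s t hst ↦
    hf (min_le_right s b) (min_le_right t b) (min_le_min_right b hst)
  have hrange : BddBelow (range fun t ↦ f (min t b)) :=
    hbdd.mono (range_subset_iff.2 fun t ↦ mem_image_of_mem f (min_le_right t b))
  refine ⟨_, (tendsto_atBot_ciInf hmono hrange).congr' ?_⟩
  filter_upwards [eventually_le_atBot b] with t ht
  rw [min_eq_left ht]

section NormedSpace

variable {E : Type*} [NormedAddCommGroup E] [NormedSpace ℝ E]

theorem exists_forall_hasDerivAt_of_continuousOn [CompleteSpace E] {f : ℝ → E} {s : Set ℝ}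
    (hs : IsOpen s) (hsc : s.OrdConnected) (hf : ContinuousOn f s) :
    ∃ F : ℝ → E, ∀ t ∈ s, HasDerivAt F (f t) t := by
  rcases s.eq_empty_or_nonempty with rfl | ⟨a, ha⟩
  · exact ⟨0, fun t ht ↦ ht.elim⟩
  · exact ⟨fun t ↦ ∫ x in a..t, f x, fun t ht ↦ intervalIntegral.integral_hasDerivAt_right
      (hf.mono (hsc.uIcc_subset ha ht)).intervalIntegrable
      (hf.stronglyMeasurableAtFilter hs t ht) (hf.continuousAt (hs.mem_nhds ht))⟩

theorem eq_exp_sub_smul_of_hasDerivAt_smul {g G : ℝ → ℝ} {w : ℝ → E} {s : Set ℝ}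
    (hs : IsOpen s) (hsc : IsPreconnected s) (hG : ∀ t ∈ s, HasDerivAt G (g t) t)
    (hw : ∀ t ∈ s, HasDerivAt w (g t • w t) t) {a b : ℝ} (ha : a ∈ s) (hb : b ∈ s) :
    w a = Real.exp (G a - G b) • w b := by
  have hderiv (t : ℝ) (ht : t ∈ s) : HasDerivAt (fun t ↦ Real.exp (-G t) • w t) 0 t := by
    convert! (hG t ht).fun_neg.exp.fun_smul (hw t ht) using 1
    module
  have hconst : Real.exp (-G a) • w a = Real.exp (-G b) • w b :=
    hs.is_const_of_deriv_eq_zero hsc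
      (fun t ht ↦ (hderiv t ht).differentiableAt.differentiableWithinAt)
      (fun t ht ↦ (hderiv t ht).deriv) ha hb
  calc w a = Real.exp (G a) • Real.exp (-G a) • w a := by
        rw [smul_smul, ← Real.exp_add, add_neg_cancel, Real.exp_zero, one_smul]
    _ = Real.exp (G a - G b) • w b := by
        rw [hconst, smul_smul, ← Real.exp_add, sub_eq_add_neg]

theorem exists_tendsto_atBot_of_hasDerivAt_nonneg_smul {g : ℝ → ℝ} {w : ℝ → E}
    (hg : ∀ᶠ t in atBot, 0 ≤ g t) (hgc : ∀ᶠ t in atBot, ContinuousAt g t)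
    (hw : ∀ᶠ t in atBot, HasDerivAt w (g t • w t) t) :
    ∃ l, Tendsto w atBot (𝓝 l) := by
  obtain ⟨c, -, hc⟩ := atBot_basis_Iio.eventually_iff.1 (hg.and (hgc.and hw))
  have hg_cont : ContinuousOn g (Iio c) := fun t ht ↦ (hc ht).2.1.continuousWithinAt
  obtain ⟨G, hG⟩ :=
    exists_forall_hasDerivAt_of_continuousOn isOpen_Iio ordConnected_Iio hg_cont
  obtain ⟨b, hb⟩ := exists_lt c
  have hG_mono : MonotoneOn G (Iio c) :=
    monotoneOn_of_hasDerivWithinAt_nonneg (convex_Iio c)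
      (fun t ht ↦ (hG t ht).continuousAt.continuousWithinAt)
      (fun t ht ↦ (hG t (interior_subset ht)).hasDerivWithinAt)
      (fun t ht ↦ (hc (interior_subset ht)).1)
  have hexp_mono : MonotoneOn (fun t ↦ Real.exp (G t - G b)) (Iic b) := fun s hs t ht hst ↦
    Real.exp_le_exp.2 <|
      sub_le_sub_right (hG_mono (lt_of_le_of_lt hs hb) (lt_of_le_of_lt ht hb) hst) _
  obtain ⟨l, hl⟩ := exists_tendsto_atBot_of_monotoneOn_Iic hexp_mono
    ⟨0, forall_mem_image.2 fun t _ ↦ (Real.exp_pos _).le⟩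
  refine ⟨l • w b, (hl.smul_const (w b)).congr' ?_⟩
  filter_upwards [eventually_lt_atBot c] with t ht
  exact (eq_exp_sub_smul_of_hasDerivAt_smul isOpen_Iio isPreconnected_Iio hG
    (fun t ht ↦ (hc ht).2.2) ht hb).symm

theorem tendsto_sub_sub_one_atBot_of_tendsto_deriv {f f' : ℝ → E} {a' : E}
    (hf : ∀ᶠ t in atBot, HasDerivAt f (f' t) t) (ha' : Tendsto f' atBot (𝓝 a')) :
    Tendsto (fun t ↦ f t - f (t - 1)) atBot (𝓝 a') := by
  refine Metric.nhds_basis_closedBall.tendsto_right_iff.2 fun ε hε ↦ ?_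
  obtain ⟨T, hT⟩ := eventually_atBot.1
    (hf.and (ha'.eventually (Metric.closedBall_mem_nhds a' hε)))
  filter_upwards [eventually_le_atBot T] with t ht
  have hderiv (s : ℝ) (hs : s ∈ Icc (t - 1) t) :
      HasDerivWithinAt (fun s ↦ f s - s • a') (f' s - (1 : ℝ) • a') (Icc (t - 1) t) s :=
    ((hT s (hs.2.trans ht)).1.sub ((hasDerivAt_id s).smul_const a')).hasDerivWithinAt
  have hderiv_le (s : ℝ) (hs : s ∈ Ico (t - 1) t) : ‖f' s - (1 : ℝ) • a'‖ ≤ ε := by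
    rw [one_smul, ← mem_closedBall_iff_norm]
    exact (hT s (hs.2.le.trans ht)).2
  rw [mem_closedBall_iff_norm]
  calc ‖f t - f (t - 1) - a'‖ = ‖f t - t • a' - (f (t - 1) - (t - 1) • a')‖ := by
        congr 1
        module
    _ ≤ ε * (t - (t - 1)) :=
        norm_image_sub_le_of_norm_deriv_le_segment' hderiv hderiv_le t
          (right_mem_Icc.2 (sub_le_self t zero_le_one))
    _ = ε := by ring

theorem eq_zero_of_hasDerivAt_of_tendsto_atBot {f f' : ℝ → E} {a a' : E}
    (hf : ∀ᶠ t in atBot, HasDerivAt f (f' t) t) (ha : Tendsto f atBot (𝓝 a))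
    (ha' : Tendsto f' atBot (𝓝 a')) : a' = 0 := by
  have hincr : Tendsto (fun t ↦ f t - f (t - 1)) atBot (𝓝 (a - a)) :=
    ha.sub (ha.comp (tendsto_atBot_add_const_right _ (-1) tendsto_id))
  rw [sub_self] at hincr
  exact tendsto_nhds_unique (tendsto_sub_sub_one_atBot_of_tendsto_deriv hf ha') hincr

theorem eq_zero_of_tendsto_atBot_of_hasDerivAt_comp {X : E → E} {v : ℝ → E} {a : E}
    (hX : ContinuousAt X a) (hv : ∀ᶠ t in atBot, HasDerivAt v (X (v t)) t)
    (ha : Tendsto v atBot (𝓝 a)) : X a = 0 :=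
  eq_zero_of_hasDerivAt_of_tendsto_atBot hv ha (hX.tendsto.comp ha)

/-- The vector field `v ↦ (‖v‖² - 1/2) (σ/2 + ρ v)` of the effective asymptotic anisotropy dynamics,
on an arbitrary real normed space in place of the plane. -/
noncomputable def effectiveVectorField (σ : E) (ρ : ℝ) (v : E) : E :=
  (‖v‖ ^ 2 - 1 / 2) • ((1 / 2 : ℝ) • σ + ρ • v)

theorem continuous_effectiveVectorField (σ : E) (ρ : ℝ) :
    Continuous (effectiveVectorField σ ρ) := by
  unfold effectiveVectorField
  fun_prop

theorem effectiveVectorField_eq_smul_add {ρ : ℝ} (hρ : ρ ≠ 0) (σ v : E) :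
    effectiveVectorField σ ρ v = (ρ * (‖v‖ ^ 2 - 1 / 2)) • (v + (2 * ρ)⁻¹ • σ) := by
  have hcenter : (1 / 2 : ℝ) • σ = ρ • (2 * ρ)⁻¹ • σ := by
    rw [smul_smul]
    congr 1
    field_simp
  rw [effectiveVectorField, hcenter]
  module

theorem norm_sq_le_half_of_half_smul_add_smul_eq_zero {σ v : E} {ρ : ℝ} (hρ : ρ ≠ 0)
    (hσ : ‖σ‖ ^ 2 ≤ 2 * ρ ^ 2) (h : (1 / 2 : ℝ) • σ + ρ • v = 0) : ‖v‖ ^ 2 ≤ 1 / 2 := by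
  have hσv : σ = (-2 * ρ) • v := by linear_combination (norm := module) (2 : ℝ) • h
  have hnorm : ‖σ‖ ^ 2 = 4 * ρ ^ 2 * ‖v‖ ^ 2 := by
    rw [hσv, norm_smul, mul_pow, Real.norm_eq_abs, sq_abs]
    ring
  have hρ_sq : 0 < ρ ^ 2 := by positivity
  nlinarith

theorem norm_sq_eq_half_of_effectiveVectorField_eq_zero {σ v : E} {ρ : ℝ} (hρ : ρ ≠ 0)
    (hσ : ‖σ‖ ^ 2 ≤ 2 * ρ ^ 2) (hv : 1 / 2 ≤ ‖v‖ ^ 2) (h : effectiveVectorField σ ρ v = 0) :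
    ‖v‖ ^ 2 = 1 / 2 := by
  rcases smul_eq_zero.1 h with hkasner | hcenter
  · exact sub_eq_zero.1 hkasner
  · exact (norm_sq_le_half_of_half_smul_add_smul_eq_zero hρ hσ hcenter).antisymm hv

theorem exists_tendsto_atBot_of_hasDerivAt_effectiveVectorField {σ : E} {ρ : ℝ} (hρ : 0 < ρ)
    {v : ℝ → E} (hv : ∀ᶠ t in atBot, HasDerivAt v (effectiveVectorField σ ρ (v t)) t)
    (hbound : ∀ᶠ t in atBot, 1 / 2 ≤ ‖v t‖ ^ 2) :
    ∃ l, Tendsto v atBot (𝓝 l) := by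
  obtain ⟨l, hl⟩ := exists_tendsto_atBot_of_hasDerivAt_nonneg_smul
    (g := fun t ↦ ρ * (‖v t‖ ^ 2 - 1 / 2)) (w := fun t ↦ v t + (2 * ρ)⁻¹ • σ)
    (hbound.mono fun t ht ↦ mul_nonneg hρ.le (sub_nonneg.2 ht))
    (hv.mono fun t ht ↦ ((ht.continuousAt.norm.pow 2).sub_const _).const_mul ρ)
    (hv.mono fun t ht ↦ effectiveVectorField_eq_smul_add hρ.ne' σ (v t) ▸ ht.add_const _)
  refine ⟨l - (2 * ρ)⁻¹ • σ, ?_⟩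
  simpa only [add_sub_cancel_right] using hl.sub_const ((2 * ρ)⁻¹ • σ)

theorem effective_trajectory_tends_to_kasner_general {σ : E} {ρ : ℝ} (hρ : 0 < ρ)
    (hσ : ‖σ‖ ^ 2 ≤ 2 * ρ ^ 2) {v : ℝ → E}
    (hv : ∀ᶠ t in atBot, HasDerivAt v (effectiveVectorField σ ρ (v t)) t)
    (hbound : ∀ᶠ t in atBot, 1 / 2 ≤ ‖v t‖ ^ 2) :
    ∃ vs : E, ‖vs‖ ^ 2 = 1 / 2 ∧ Tendsto v atBot (𝓝 vs) := by
  obtain ⟨vs, hvs⟩ := exists_tendsto_atBot_of_hasDerivAt_effectiveVectorField hρ hv hbound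
  have hvs_norm : 1 / 2 ≤ ‖vs‖ ^ 2 := ge_of_tendsto (hvs.norm.pow 2) hbound
  have hvs_zero : effectiveVectorField σ ρ vs = 0 :=
    eq_zero_of_tendsto_atBot_of_hasDerivAt_comp
      (continuous_effectiveVectorField σ ρ).continuousAt hv hvs
  exact ⟨vs, norm_sq_eq_half_of_effectiveVectorField_eq_zero hρ.ne' hσ hvs_norm hvs_zero, hvs⟩

end NormedSpace

/-- Every trajectory of the effective asymptotic Bianchi IX dynamics approaches
a Kasner velocity as the volume goes to zero: if ‖σ‖² ≤ 2ρ² and v solves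
v' = (‖v‖² − 1/2)(σ/2 + ρv) with ‖v(t)‖² > 1/2 for all t ≤ t₀, then v(t)
converges as t → −∞ to some v* with ‖v*‖² = 1/2. -/
theorem effective_trajectory_tends_to_kasner
    (σ : EuclideanSpace ℝ (Fin 2)) (ρ : ℝ) (hρ : 0 < ρ)
    (hσ : ‖σ‖ ^ 2 ≤ 2 * ρ ^ 2)
    (t₀ : ℝ) (v : ℝ → EuclideanSpace ℝ (Fin 2))
    (hv : ∀ t ≤ t₀, HasDerivAt v
        ((‖v t‖ ^ 2 - 1 / 2) • ((1 / 2 : ℝ) • σ + ρ • v t)) t)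
    (hbound : ∀ t ≤ t₀, 1 / 2 < ‖v t‖ ^ 2) :
    ∃ vs : EuclideanSpace ℝ (Fin 2), ‖vs‖ ^ 2 = 1 / 2
      ∧ Filter.Tendsto v Filter.atBot (nhds vs) :=
  effective_trajectory_tends_to_kasner_general hρ hσ
    ((Filter.eventually_le_atBot t₀).mono hv)
    ((Filter.eventually_le_atBot t₀).mono fun t ht ↦ (hbound t ht).le)
end

section
/- Let σ ∈ ℝ² and ρ > 0 with ‖σ‖² = 8ρ², and let v : (−∞, t₀] → ℝ² be differentiable with v'(t) = (‖v(t)‖² − 1/2)(σ/2 + ρv(t)) and ‖v(t)‖² < 1/2 for all t ≤ t₀. Then v(t) converges as t → −∞ to a limit v* ∈ ℝ² with ‖v*‖² = 1/2. In other words, any trajectory of the classical asymptotic dynamics that remains in one asymptotic angular region for all backward time approaches a Kasner velocity. -/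
/-!
Along a solution of `v' = g(v) • (a + ρ • v)` the vector `w = a + ρ • v` solves the scalar linear
equation `w' = ρ g(v) • w`, so `w` keeps its direction and `v` moves on a line. If `g(v) ≤ 0`, the
position of `v` on that line is monotone in time; boundedness then forces `v` to converge as
`t → -∞`, and the limit is an equilibrium. For `g(v) = ‖v‖² - 1/2` and `a = σ/2` the equilibria are
the Kasner velocities `‖v‖² = 1/2` and the solutions of `σ/2 + ρ v = 0`; the latter satisfy
`‖σ‖² = 4ρ²‖v‖²`, so none of them has `‖v‖² < 1/2` when `2ρ² ≤ ‖σ‖²` and `σ ≠ 0`.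
-/

open Set Filter Topology

section NormedSpace

variable {E : Type*} [NormedAddCommGroup E] [NormedSpace ℝ E]

lemma eq_of_hasDerivWithinAt_zero {f : ℝ → E} {s : Set ℝ} (hs : Convex ℝ s)
    (hf : ∀ x ∈ s, HasDerivWithinAt f 0 s x) {x y : ℝ} (hx : x ∈ s) (hy : y ∈ s) : f x = f y := by
  have hle : ‖f x - f y‖ ≤ 0 * ‖x - y‖ :=
    hs.norm_image_sub_le_of_norm_hasDerivWithin_le hf (fun _ _ ↦ norm_zero.le) hy hx
  simpa [sub_eq_zero] using hle

lemma eq_exp_smul_of_hasDerivWithinAt_smul {f : ℝ → E} {Φ φ : ℝ → ℝ} {s : Set ℝ}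
    (hs : Convex ℝ s) (hΦ : ∀ x ∈ s, HasDerivWithinAt Φ (φ x) s x)
    (hf : ∀ x ∈ s, HasDerivWithinAt f (φ x • f x) s x) {x y : ℝ} (hx : x ∈ s) (hy : y ∈ s) :
    f x = Real.exp (Φ x - Φ y) • f y := by
  have hconst : Real.exp (-Φ x) • f x = Real.exp (-Φ y) • f y := by
    refine eq_of_hasDerivWithinAt_zero (f := fun z ↦ Real.exp (-Φ z) • f z) hs
      (fun z hz ↦ ?_) hx hy
    convert! (hΦ z hz).neg.exp.smul (hf z hz) using 1
    module
  calc f x = Real.exp (Φ x) • Real.exp (-Φ x) • f x := by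
        rw [smul_smul, ← Real.exp_add, add_neg_cancel, Real.exp_zero, one_smul]
    _ = Real.exp (Φ x - Φ y) • f y := by
        rw [hconst, smul_smul, ← Real.exp_add, sub_eq_add_neg]

lemma exists_primitive_on_Iic [CompleteSpace E] {φ : ℝ → E} {b : ℝ}
    (hφ : ContinuousOn φ (Iic b)) :
    ∃ Φ : ℝ → E, ∀ x ∈ Iic b, HasDerivWithinAt Φ (φ x) (Iic b) x := by
  have hcont : Continuous fun x ↦ φ (min x b) :=
    hφ.comp_continuous (by fun_prop) fun x ↦ min_le_right x b
  refine ⟨fun x ↦ ∫ y in b..x, φ (min y b), fun x hx ↦ ?_⟩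
  have hderiv := (hcont.integral_hasStrictDerivAt b x).hasDerivAt.hasDerivWithinAt (s := Iic b)
  rwa [min_eq_left (mem_Iic.mp hx)] at hderiv

-- By the mean value inequality `f t - f (t - 1)` tends to the limit of the derivative.
lemma eq_zero_of_tendsto_deriv_atBot {f f' : ℝ → E} {b : ℝ} {l d : E}
    (hf : ∀ t ∈ Iic b, HasDerivWithinAt f (f' t) (Iic b) t)
    (hlim : Tendsto f atBot (𝓝 l)) (hlim' : Tendsto f' atBot (𝓝 d)) : d = 0 := by
  have hshift : Tendsto (fun t ↦ f t - f (t - 1)) atBot (𝓝 0) := by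
    simpa [← sub_eq_add_neg] using
      hlim.sub (hlim.comp (tendsto_atBot_add_const_right _ (-1) tendsto_id))
  refine tendsto_nhds_unique (Metric.tendsto_nhds.mpr fun ε hε ↦ ?_) hshift
  obtain ⟨T, hT⟩ := eventually_atBot.mp (Metric.tendsto_nhds.mp hlim' (ε / 2) (half_pos hε))
  filter_upwards [Iic_mem_atBot T, Iic_mem_atBot b] with t htT htb
  have hderiv : ∀ x ∈ Icc (t - 1) t,
      HasDerivWithinAt (fun x ↦ f x - x • d) (f' x - d) (Icc (t - 1) t) x := fun x hx ↦ by
    have hxd := (hasDerivWithinAt_id x (Icc (t - 1) t)).smul_const d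
    rw [one_smul] at hxd
    exact ((hf x (hx.2.trans htb)).mono fun y hy ↦ hy.2.trans htb).sub hxd
  have hmean := norm_image_sub_le_of_norm_deriv_le_segment' hderiv
    (fun x hx ↦ (mem_ball_iff_norm.mp (hT x (hx.2.le.trans htT))).le) t ⟨by linarith, le_rfl⟩
  calc dist (f t - f (t - 1)) d = ‖f t - t • d - (f (t - 1) - (t - 1) • d)‖ := by
        rw [dist_eq_norm]; congr 1; module
    _ ≤ ε / 2 * (t - (t - 1)) := hmean
    _ < ε := by linarith

lemma exists_tendsto_atBot_of_antitoneOn {s : ℝ → ℝ} {b : ℝ} (hs : AntitoneOn s (Iic b))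
    (hbdd : BddAbove (s '' Iic b)) : ∃ l, Tendsto s atBot (𝓝 l) := by
  have hanti : Antitone fun t ↦ s (min t b) := fun x y hxy ↦
    hs (min_le_right x b) (min_le_right y b) (min_le_min_right b hxy)
  have hrange : BddAbove (range fun t ↦ s (min t b)) :=
    hbdd.mono (range_subset_iff.mpr fun t ↦ mem_image_of_mem s (min_le_right t b))
  refine ⟨_, (tendsto_atBot_ciSup hanti hrange).congr' ?_⟩
  filter_upwards [Iic_mem_atBot b] with t ht
  rw [min_eq_left (mem_Iic.mp ht)]

lemma exists_tendsto_atBot_of_antitoneOn_smul {v : ℝ → E} {s : ℝ → ℝ} {b : ℝ} {p w : E}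
    (hs : AntitoneOn s (Iic b)) (hv : ∀ t ∈ Iic b, v t = p + s t • w)
    (hbdd : Bornology.IsBounded (v '' Iic b)) : ∃ l, Tendsto v atBot (𝓝 l) := by
  have hv_ev : (fun t ↦ p + s t • w) =ᶠ[atBot] v := by
    filter_upwards [Iic_mem_atBot b] with t ht using (hv t ht).symm
  rcases eq_or_ne w 0 with rfl | hw
  · exact ⟨p, Tendsto.congr' hv_ev (by simp)⟩
  obtain ⟨C, hC⟩ := hbdd.exists_norm_le
  have hs_le : ∀ t ∈ Iic b, s t ≤ (C + ‖p‖) / ‖w‖ := fun t ht ↦ by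
    rw [le_div_iff₀ (norm_pos_iff.mpr hw)]
    calc s t * ‖w‖ ≤ ‖s t • w‖ := by
          rw [norm_smul]; gcongr; exact Real.le_norm_self _
      _ = ‖v t - p‖ := by rw [hv t ht, add_sub_cancel_left]
      _ ≤ ‖v t‖ + ‖p‖ := norm_sub_le _ _
      _ ≤ C + ‖p‖ := by gcongr; exact hC _ (mem_image_of_mem v ht)
  obtain ⟨l, hl⟩ := exists_tendsto_atBot_of_antitoneOn hs ⟨_, forall_mem_image.mpr hs_le⟩
  exact ⟨p + l • w, ((hl.smul_const w).const_add p).congr' hv_ev⟩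

variable {a : E} {ρ t₀ : ℝ} {v : ℝ → E}

lemma exists_antitoneOn_eq_add_smul {φ : ℝ → ℝ} (hφ : ContinuousOn φ (Iic t₀))
    (hφ_nonpos : ∀ t ∈ Iic t₀, φ t ≤ 0)
    (hv : ∀ t ∈ Iic t₀, HasDerivWithinAt v (φ t • (a + ρ • v t)) (Iic t₀) t) :
    ∃ s : ℝ → ℝ, AntitoneOn s (Iic t₀) ∧
      ∃ p : E, ∀ t ∈ Iic t₀, v t = p + s t • (a + ρ • v t₀) := by
  set w₀ := a + ρ • v t₀
  obtain ⟨Φ, hΦ⟩ := exists_primitive_on_Iic (hφ.const_mul ρ)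
  have hw : ∀ t ∈ Iic t₀, a + ρ • v t = Real.exp (Φ t - Φ t₀) • w₀ := fun t ht ↦
    eq_exp_smul_of_hasDerivWithinAt_smul (f := fun t ↦ a + ρ • v t) (convex_Iic t₀) hΦ
      (fun x hx ↦ by
        simpa only [Pi.smul_apply, mul_smul] using ((hv x hx).const_smul ρ).const_add a)
      ht self_mem_Iic
  have hΦ_cont : ContinuousOn Φ (Iic t₀) := HasDerivWithinAt.continuousOn hΦ
  obtain ⟨s, hs⟩ := exists_primitive_on_Iic
    (hφ.mul (Real.continuous_exp.comp_continuousOn (hΦ_cont.sub continuousOn_const)))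
  refine ⟨s, ?_, v t₀ - s t₀ • w₀, fun t ht ↦ ?_⟩
  · refine antitoneOn_of_hasDerivWithinAt_nonpos (convex_Iic t₀)
      (HasDerivWithinAt.continuousOn hs)
      (fun t ht ↦ (hs t (interior_subset ht)).mono interior_subset) fun t ht ↦ ?_
    exact mul_nonpos_of_nonpos_of_nonneg (hφ_nonpos t (interior_subset ht)) (Real.exp_nonneg _)
  · have hconst : v t - s t • w₀ = v t₀ - s t₀ • w₀ := by
      refine eq_of_hasDerivWithinAt_zero (f := fun t ↦ v t - s t • w₀) (convex_Iic t₀)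
        (fun x hx ↦ ?_) ht self_mem_Iic
      convert! (hv x hx).sub ((hs x hx).smul_const w₀) using 1
      rw [hw x hx, smul_smul]
      exact (sub_self _).symm
    rw [← hconst, sub_add_cancel]

theorem exists_tendsto_atBot_equilibrium {g : E → ℝ} (hg : Continuous g)
    (hv : ∀ t ∈ Iic t₀, HasDerivWithinAt v (g (v t) • (a + ρ • v t)) (Iic t₀) t)
    (hg_nonpos : ∀ t ∈ Iic t₀, g (v t) ≤ 0) (hbdd : Bornology.IsBounded (v '' Iic t₀)) :
    ∃ l, g l • (a + ρ • l) = 0 ∧ Tendsto v atBot (𝓝 l) := by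
  have hv_cont : ContinuousOn v (Iic t₀) := HasDerivWithinAt.continuousOn hv
  obtain ⟨s, hs, p, hvp⟩ :=
    exists_antitoneOn_eq_add_smul (hg.comp_continuousOn hv_cont) hg_nonpos hv
  obtain ⟨l, hl⟩ := exists_tendsto_atBot_of_antitoneOn_smul hs hvp hbdd
  have hfield : Continuous fun x ↦ g x • (a + ρ • x) := by fun_prop
  exact ⟨l, eq_zero_of_tendsto_deriv_atBot hv hl ((hfield.tendsto l).comp hl), hl⟩

lemma norm_sq_eq_of_half_smul_add_smul_eq_zero {σ x : E} (h : (1 / 2 : ℝ) • σ + ρ • x = 0) :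
    ‖σ‖ ^ 2 = 4 * ρ ^ 2 * ‖x‖ ^ 2 := by
  have hσ : σ = (-2 * ρ) • x := by linear_combination (norm := module) (2 : ℝ) • h
  rw [hσ, norm_smul, mul_pow, Real.norm_eq_abs, sq_abs]
  ring

end NormedSpace

theorem classical_trajectory_tends_to_kasner_general {E : Type*} [NormedAddCommGroup E]
    [NormedSpace ℝ E] {σ : E} {ρ : ℝ} (hσ₀ : σ ≠ 0) (hσ : 2 * ρ ^ 2 ≤ ‖σ‖ ^ 2)
    {t₀ : ℝ} {v : ℝ → E}
    (hv : ∀ t ≤ t₀, HasDerivWithinAt v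
        ((‖v t‖ ^ 2 - 1 / 2) • ((1 / 2 : ℝ) • σ + ρ • v t)) (Iic t₀) t)
    (hbound : ∀ t ≤ t₀, ‖v t‖ ^ 2 ≤ 1 / 2) :
    ∃ vs : E, ‖vs‖ ^ 2 = 1 / 2 ∧ Tendsto v atBot (𝓝 vs) := by
  have hbdd : Bornology.IsBounded (v '' Iic t₀) :=
    isBounded_iff_forall_norm_le.mpr
      ⟨√(1 / 2), forall_mem_image.mpr fun t ht ↦ Real.le_sqrt_of_sq_le (hbound t ht)⟩
  obtain ⟨vs, hequil, hlim⟩ := exists_tendsto_atBot_equilibrium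
    (g := fun x ↦ ‖x‖ ^ 2 - 1 / 2) (by fun_prop) hv (fun t ht ↦ sub_nonpos.mpr (hbound t ht)) hbdd
  refine ⟨vs, ?_, hlim⟩
  rcases smul_eq_zero.mp hequil with hkasner | hzero
  · exact sub_eq_zero.mp hkasner
  have hvs_le : ‖vs‖ ^ 2 ≤ 1 / 2 :=
    le_of_tendsto (hlim.norm.pow 2) ((eventually_le_atBot t₀).mono hbound)
  have hσ_eq := norm_sq_eq_of_half_smul_add_smul_eq_zero hzero
  have hρ : ρ ≠ 0 := by
    rintro rfl
    simp [hσ₀] at hσ_eq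
  have hρ_pos : 0 < 4 * ρ ^ 2 := by positivity
  exact hvs_le.antisymm (le_of_mul_le_mul_left (by linarith) hρ_pos)

/-- Classical asymptotic dynamics: if ‖σ‖² = 8ρ² and v solves
v' = (‖v‖² − 1/2)(σ/2 + ρv) with ‖v(t)‖² < 1/2 for all t ≤ t₀ (i.e. the
trajectory remains in one asymptotic angular region for all backward time),
then v(t) converges as t → −∞ to some v* with ‖v*‖² = 1/2. -/
theorem classical_trajectory_tends_to_kasner
    (σ : EuclideanSpace ℝ (Fin 2)) (ρ : ℝ) (hρ : 0 < ρ)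
    (hσ : ‖σ‖ ^ 2 = 8 * ρ ^ 2)
    (t₀ : ℝ) (v : ℝ → EuclideanSpace ℝ (Fin 2))
    (hv : ∀ t ≤ t₀, HasDerivAt v
        ((‖v t‖ ^ 2 - 1 / 2) • ((1 / 2 : ℝ) • σ + ρ • v t)) t)
    (hbound : ∀ t ≤ t₀, ‖v t‖ ^ 2 < 1 / 2) :
    ∃ vs : EuclideanSpace ℝ (Fin 2), ‖vs‖ ^ 2 = 1 / 2
      ∧ Filter.Tendsto v Filter.atBot (nhds vs) := by
  have hσ₀ : σ ≠ 0 := by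
    rintro rfl
    simp [hρ.ne'] at hσ
  exact classical_trajectory_tends_to_kasner_general hσ₀ (by nlinarith)
    (fun t ht ↦ (hv t ht).hasDerivWithinAt) fun t ht ↦ (hbound t ht).le
end

section
/- Let 0 < l < 1 and L = (2 − l)/(1 − l). With σ₁ = (4/√6, 0), σ₂ = (−2/√6, √2) and ρ₀ = 2/√3, set σ_a = L·σ₁ + 2·σ₂ and ρ_a = (L + 2)·ρ₀. Then ‖σ_a‖²/(2ρ_a²) = (3l² − 6l + 4)/(4 − 3l)², and this quantity is strictly less than 1 for every 0 < l < 1 (tending to 1 only in the limit l → 1). -/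
/-!
The vectors `σ₁` and `σ₂` have equal length `√2 ρ₀` and enclose an angle of `2π/3`, so a term
`μ₁ ^ a * μ₂ ^ b` of the potential has `‖σ‖² = 2ρ₀²(a² - ab + b²)` and `2ρ² = 2ρ₀²(a + b)²`. These
differ by `6ρ₀²ab`, so the ratio is below `1` exactly when `a` and `b` have the same sign.
For the small-`μ` potential `a = L` and `b = 2`.
-/

/-- Two exponent vectors of the triad variables `μ_I ∝ exp (ρ₀ q⁰ + σ_I · q)`, described by their
inner products only: they have squared length `2ρ₀²` and enclose an angle of `2π/3`. -/
structure IsTriadExponentPair {E : Type*} [NormedAddCommGroup E] [InnerProductSpace ℝ E]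
    (ρ₀ : ℝ) (σ₁ σ₂ : E) : Prop where
  norm_sq_left : ‖σ₁‖ ^ 2 = 2 * ρ₀ ^ 2
  norm_sq_right : ‖σ₂‖ ^ 2 = 2 * ρ₀ ^ 2
  inner_eq : inner ℝ σ₁ σ₂ = -ρ₀ ^ 2

namespace IsTriadExponentPair

section InnerProductSpace

variable {E : Type*} [NormedAddCommGroup E] [InnerProductSpace ℝ E] {ρ₀ : ℝ} {σ₁ σ₂ : E}

theorem norm_smul_add_smul_sq (h : IsTriadExponentPair ρ₀ σ₁ σ₂) (a b : ℝ) :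
    ‖a • σ₁ + b • σ₂‖ ^ 2 = 2 * ρ₀ ^ 2 * (a ^ 2 - a * b + b ^ 2) := by
  rw [norm_add_sq_real, norm_smul, norm_smul, mul_pow, mul_pow, real_inner_smul_left,
    real_inner_smul_right, Real.norm_eq_abs, Real.norm_eq_abs, sq_abs, sq_abs,
    h.norm_sq_left, h.norm_sq_right, h.inner_eq]
  ring

theorem norm_smul_add_smul_sq_div (h : IsTriadExponentPair ρ₀ σ₁ σ₂) (hρ₀ : ρ₀ ≠ 0) (a b : ℝ) :
    ‖a • σ₁ + b • σ₂‖ ^ 2 / (2 * ((a + b) * ρ₀) ^ 2) =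
      (a ^ 2 - a * b + b ^ 2) / (a + b) ^ 2 := by
  have two_mul_sq_ne_zero : 2 * ρ₀ ^ 2 ≠ 0 := by positivity
  calc
    _ = 2 * ρ₀ ^ 2 * (a ^ 2 - a * b + b ^ 2) / (2 * ρ₀ ^ 2 * (a + b) ^ 2) := by
      rw [h.norm_smul_add_smul_sq]
      ring
    _ = _ := mul_div_mul_left _ _ two_mul_sq_ne_zero

end InnerProductSpace

theorem bianchiIX :
    IsTriadExponentPair (2 / √3)
      ((WithLp.equiv 2 (Fin 2 → ℝ)).symm ![4 / √6, 0])
      ((WithLp.equiv 2 (Fin 2 → ℝ)).symm ![-2 / √6, √2]) where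
  norm_sq_left := by
    norm_num [EuclideanSpace.real_norm_sq_eq, div_pow]
  norm_sq_right := by
    norm_num [EuclideanSpace.real_norm_sq_eq, div_pow]
  inner_eq := by
    norm_num [PiLp.inner_apply, div_pow, div_mul_div_comm]

end IsTriadExponentPair

section Field

variable {K : Type*} [Field K]

theorem sq_sub_mul_add_sq_div_add_sq_lt_one [LinearOrder K] [IsStrictOrderedRing K] {a b : K}
    (hab : 0 < a * b) : (a ^ 2 - a * b + b ^ 2) / (a + b) ^ 2 < 1 := by
  have add_sq_pos : 0 < (a + b) ^ 2 := by
    rw [add_sq, mul_assoc]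
    positivity
  have gap : (a + b) ^ 2 - (a ^ 2 - a * b + b ^ 2) = 3 * (a * b) := by ring
  rw [div_lt_one add_sq_pos, ← sub_pos, gap]
  positivity

theorem sq_sub_mul_two_add_sq_div_add_two_sq_eq {l L : K} (hl : l ≠ 1)
    (hL : L = (2 - l) / (1 - l)) :
    (L ^ 2 - L * 2 + 2 ^ 2) / (L + 2) ^ 2 = (3 * l ^ 2 - 6 * l + 4) / (4 - 3 * l) ^ 2 := by
  have one_sub_ne_zero : 1 - l ≠ 0 := sub_ne_zero_of_ne hl.symm
  have numerator : L ^ 2 - L * 2 + 2 ^ 2 = (3 * l ^ 2 - 6 * l + 4) / (1 - l) ^ 2 := by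
    rw [hL]
    field_simp
    ring
  have denominator : L + 2 = (4 - 3 * l) / (1 - l) := by
    rw [hL]
    field_simp
    ring
  rw [numerator, denominator, div_pow,
    div_div_div_cancel_right₀ (pow_ne_zero 2 one_sub_ne_zero)]

end Field

theorem effective_exponent_ratio_lt_one_general {E : Type*} [NormedAddCommGroup E]
    [InnerProductSpace ℝ E] {l L ρ₀ : ℝ} {σ₁ σ₂ : E} (hL : L = (2 - l) / (1 - l)) (hL_pos : 0 < L)
    (hσ : IsTriadExponentPair ρ₀ σ₁ σ₂) (hρ₀ : ρ₀ ≠ 0) :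
    ‖L • σ₁ + (2 : ℝ) • σ₂‖ ^ 2 / (2 * ((L + 2) * ρ₀) ^ 2) =
        (3 * l ^ 2 - 6 * l + 4) / (4 - 3 * l) ^ 2 ∧
      (3 * l ^ 2 - 6 * l + 4) / (4 - 3 * l) ^ 2 < 1 := by
  -- At `l = 1` division by zero would give `L = 0`.
  have hl : l ≠ 1 := by
    rintro rfl
    simp [hL] at hL_pos
  rw [hσ.norm_smul_add_smul_sq_div hρ₀, ← sq_sub_mul_two_add_sq_div_add_two_sq_eq hl hL]
  exact ⟨rfl, sq_sub_mul_add_sq_div_add_sq_lt_one (by positivity)⟩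

/-- For 0 < l < 1 and L = (2−l)/(1−l), the asymptotic exponent data
σ_a = L·σ₁ + 2·σ₂ (with σ₁ = (4/√6, 0), σ₂ = (−2/√6, √2)) and
ρ_a = (L+2)·ρ₀ (with ρ₀ = 2/√3) satisfy
‖σ_a‖²/(2ρ_a²) = (3l² − 6l + 4)/(4 − 3l)² < 1. -/
theorem effective_exponent_ratio_lt_one
    (l : ℝ) (hl0 : 0 < l) (hl1 : l < 1)
    (L ρ₀ ρa : ℝ) (σ₁ σ₂ σa : EuclideanSpace ℝ (Fin 2))
    (hL : L = (2 - l) / (1 - l))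
    (hσ₁ : σ₁ = (WithLp.equiv 2 (Fin 2 → ℝ)).symm ![4 / Real.sqrt 6, 0])
    (hσ₂ : σ₂ = (WithLp.equiv 2 (Fin 2 → ℝ)).symm ![-2 / Real.sqrt 6, Real.sqrt 2])
    (hσa : σa = L • σ₁ + (2 : ℝ) • σ₂)
    (hρ₀ : ρ₀ = 2 / Real.sqrt 3)
    (hρa : ρa = (L + 2) * ρ₀) :
    ‖σa‖ ^ 2 / (2 * ρa ^ 2) = (3 * l ^ 2 - 6 * l + 4) / (4 - 3 * l) ^ 2
    ∧ (3 * l ^ 2 - 6 * l + 4) / (4 - 3 * l) ^ 2 < 1 := by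
  have hL_pos : 0 < L := hL ▸ div_pos (by linarith) (by linarith)
  subst hσ₁ hσ₂ hσa hρ₀ hρa
  exact effective_exponent_ratio_lt_one_general hL hL_pos .bianchiIX (by positivity)
end
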